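/- Let 𝒰 be a probability distribution on the unit sphere of ℝ^n and ν a probability distribution on ℝ whose first D moments are finite. Define the null distribution 𝒬 under which Ỹ ∈ ℝ^{N×n} has i.i.d. rows ỹ_i ∼ N(0, I_n), and the planted distribution 𝒫 under which one first draws u ∼ 𝒰 and i.i.d. x_1,…,x_N ∼ ν, and then, conditionally, draws independent rows ỹ_i ∼ N(x_i·u, I_n − uuᵀ). Define Adv_{≤D} := sup over nonzero real polynomials f of degree at most D in the Nn entries of Ỹ of 𝔼_𝒫[f(Ỹ)] / √(𝔼_𝒬[f(Ỹ)²]). Then Adv_{≤D}² = Σ_{d=0}^{D} 𝔼[⟨u, u'⟩^d] · Σ_{α ∈ ℕ^N, |α| = d} Π_{i=1}^N (𝔼_{x∼ν}[h_{α_i}(x)])², where u, u' are drawn independently from 𝒰, |α| := Σ_i α_i, and {h_k}_{k∈ℕ} are the Hermite polynomials normalized so that 𝔼_{z∼N(0,1)}[h_k(z)h_ℓ(z)] = 1{k=ℓ}. -/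

import Mathlib

open MeasureTheory ProbabilityTheory Matrix

/-- Euclidean norm of a vector in `ℝ^k`. -/
noncomputable def eucNorm {k : ℕ} (v : Fin k → ℝ) : ℝ := Real.sqrt (∑ i, (v i) ^ 2)

/-- The normalized (probabilists') Hermite polynomials `h_k`, satisfying
`𝔼_{z ∼ N(0,1)}[h_k(z) h_ℓ(z)] = 1{k = ℓ}`. -/
noncomputable def hermiteN (k : ℕ) (x : ℝ) : ℝ :=
  (Polynomial.aeval x (Polynomial.hermite k)) / Real.sqrt (Nat.factorial k)

/-! The products `h_a(y) = ∏ j, h_{a j}(y_j)` with `∑ a ≤ D` form an orthonormal basis, in `L²(𝒬)`,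
of the polynomials of degree at most `D`, so by Cauchy-Schwarz `Adv² = ∑ a, 𝔼_𝒫[h_a]²`.

For a planted row `y = x u + z - ⟨z, u⟩ u`, whose noise has covariance `I - u uᵀ`, Gaussian
integration by parts turns the operator `y_j - ∂_j` raising the `j`-th Hermite index into
`u_j (x - d/dx)`, which raises the index of a univariate Hermite polynomial. By induction,
`𝔼 h_a(y) = √(|a|! / ∏ j, (a j)!) u^a h_{|a|}(x)`.

Squaring with an independent copy `u'` and summing over all index arrays with given row sums, the
multinomial theorem collects the monomials in `u` and `u'` into `⟨u, u'⟩^d`.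
-/

section Hermite

open Polynomial

theorem derivative_hermite (k : ℕ) :
    derivative (hermite k) = (k : ℤ[X]) * hermite (k - 1) := by
  induction k with
  | zero => simp
  | succ k ih =>
    rw [hermite_succ, derivative_sub, derivative_mul, derivative_X, ih]
    cases k with
    | zero => simp
    | succ k =>
      rw [derivative_mul, derivative_natCast, add_tsub_cancel_right, add_tsub_cancel_right,
        hermite_succ k]
      push_cast
      ring

/-- The probabilists' Hermite polynomial of degree `k`, with real coefficients. -/
noncomputable def realHermite (k : ℕ) : ℝ[X] := (hermite k).map (Int.castRingHom ℝ)

@[simp]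
theorem realHermite_zero : realHermite 0 = 1 := by simp [realHermite]

theorem realHermite_succ (k : ℕ) :
    realHermite (k + 1) = X * realHermite k - derivative (realHermite k) := by
  simp [realHermite, derivative_map]

theorem derivative_realHermite (k : ℕ) :
    derivative (realHermite k) = (k : ℝ) • realHermite (k - 1) := by
  rw [realHermite, derivative_map, derivative_hermite, realHermite, smul_eq_C_mul]
  simp

theorem natDegree_realHermite (k : ℕ) : (realHermite k).natDegree = k :=
  (natDegree_map_eq_of_injective Int.cast_injective _).trans natDegree_hermite

theorem hermiteN_eq_eval (k : ℕ) (x : ℝ) :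
    hermiteN k x = (√(k.factorial : ℝ))⁻¹ * (realHermite k).eval x := by
  rw [hermiteN, realHermite, eval_map, aeval_def, div_eq_inv_mul]
  rfl

theorem continuous_hermiteN (k : ℕ) : Continuous (hermiteN k) :=
  (Polynomial.continuous_aeval _).div_const _

theorem sqrt_factorial_ne_zero (k : ℕ) : √(k.factorial : ℝ) ≠ 0 :=
  (Real.sqrt_pos.2 (mod_cast k.factorial_pos)).ne'

theorem integrable_pow_gaussianReal (k : ℕ) :
    Integrable (fun x : ℝ => x ^ k) (gaussianReal 0 1) := by
  have hLp : MemLp (id : ℝ → ℝ) k (gaussianReal 0 1) := memLp_id_gaussianReal k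
  exact (integrable_norm_iff (by fun_prop)).1 (by simpa using hLp.integrable_norm_pow')

theorem integrable_eval_gaussianReal (p : ℝ[X]) :
    Integrable (fun x => p.eval x) (gaussianReal 0 1) := by
  induction p using Polynomial.induction_on' with
  | add p q hp hq => exact (hp.add hq).congr (by simp [Pi.add_def])
  | monomial k c => simpa only [eval_monomial] using (integrable_pow_gaussianReal k).const_mul c

theorem hasDerivAt_gaussianPDFReal_std (x : ℝ) :
    HasDerivAt (gaussianPDFReal 0 1) (-x * gaussianPDFReal 0 1 x) x := by
  have hexponent : HasDerivAt (fun y : ℝ => -y ^ 2 / 2) (-x) x := by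
    simpa using ((hasDerivAt_pow 2 x).neg.div_const 2).congr_deriv (by ring)
  have hpdf : gaussianPDFReal 0 1 = fun y => (√(2 * Real.pi))⁻¹ * Real.exp (-y ^ 2 / 2) := by
    ext y
    simp [gaussianPDFReal]
  rw [hpdf]
  exact (hexponent.exp.const_mul _).congr_deriv (by ring)

theorem integral_mul_eval_gaussianReal (p : ℝ[X]) :
    ∫ x, x * p.eval x ∂gaussianReal 0 1 = ∫ x, (derivative p).eval x ∂gaussianReal 0 1 := by
  have hint (q : ℝ[X]) : Integrable (fun x => gaussianPDFReal 0 1 x * q.eval x) := by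
    have hq := integrable_eval_gaussianReal q
    rw [gaussianReal_of_var_ne_zero _ one_ne_zero,
      integrable_withDensity_iff_integrable_smul' (measurable_gaussianPDF _ _)
        (by simp [gaussianPDF_lt_top])] at hq
    simpa only [toReal_gaussianPDF, smul_eq_mul] using hq
  have hderiv (x : ℝ) : HasDerivAt (fun y => gaussianPDFReal 0 1 y * p.eval y)
      (gaussianPDFReal 0 1 x * (derivative p - X * p).eval x) x :=
    ((hasDerivAt_gaussianPDFReal_std x).mul (p.hasDerivAt x)).congr_deriv <| by
      simp only [neg_mul, eval_sub, eval_mul, eval_X]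
      ring
  have hzero : ∫ x, (derivative p - X * p).eval x ∂gaussianReal 0 1 = 0 := by
    rw [integral_gaussianReal_eq_integral_smul one_ne_zero]
    simpa only [smul_eq_mul] using
      integral_eq_zero_of_hasDerivAt_of_integrable hderiv (hint _) (hint _)
  simp only [eval_sub] at hzero
  rw [integral_sub (integrable_eval_gaussianReal _) (integrable_eval_gaussianReal _),
    sub_eq_zero] at hzero
  simpa only [eval_mul, eval_X] using hzero.symm

theorem integral_realHermite_succ_mul (k : ℕ) (p : ℝ[X]) :
    ∫ x, (realHermite (k + 1)).eval x * p.eval x ∂gaussianReal 0 1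
      = ∫ x, (realHermite k).eval x * (derivative p).eval x ∂gaussianReal 0 1 := by
  have hleibniz : realHermite k * derivative p
      = derivative (realHermite k * p) - derivative (realHermite k) * p := by
    rw [derivative_mul]
    ring
  have hraise : realHermite (k + 1) * p
      = X * (realHermite k * p) - derivative (realHermite k) * p := by
    rw [realHermite_succ]
    ring
  simp only [← eval_mul, hleibniz, hraise, eval_sub]
  rw [integral_sub (integrable_eval_gaussianReal _) (integrable_eval_gaussianReal _),
    integral_sub (integrable_eval_gaussianReal _) (integrable_eval_gaussianReal _)]
  simp only [eval_mul (p := X), eval_X, integral_mul_eval_gaussianReal]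

theorem integral_realHermite_mul_realHermite (k l : ℕ) :
    ∫ x, (realHermite k).eval x * (realHermite l).eval x ∂gaussianReal 0 1
      = if k = l then (k.factorial : ℝ) else 0 := by
  have hsucc_zero (m : ℕ) :
      ∫ x, (realHermite (m + 1)).eval x * (realHermite 0).eval x ∂gaussianReal 0 1 = 0 := by
    rw [integral_realHermite_succ_mul]
    simp
  induction k generalizing l with
  | zero =>
    cases l with
    | zero => simp
    | succ l => simpa only [mul_comm, l.succ_ne_zero.symm, if_false] using hsucc_zero l
  | succ k ih =>
    cases l with
    | zero => exact hsucc_zero k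
    | succ l =>
      rw [integral_realHermite_succ_mul]
      simp only [derivative_realHermite, add_tsub_cancel_right, eval_smul, smul_eq_mul,
        mul_left_comm _ ((l + 1 : ℕ) : ℝ), integral_const_mul, ih, add_left_inj]
      split_ifs with hkl
      · subst hkl
        rw [Nat.factorial_succ, Nat.cast_mul]
      · rw [mul_zero]

theorem integral_hermiteN_mul_hermiteN (k l : ℕ) :
    ∫ x, hermiteN k x * hermiteN l x ∂gaussianReal 0 1 = if k = l then 1 else 0 := by
  simp only [hermiteN_eq_eval, mul_mul_mul_comm _ (eval _ _), integral_const_mul,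
    integral_realHermite_mul_realHermite]
  split_ifs with hkl
  · subst hkl
    rw [← mul_inv, Real.mul_self_sqrt (Nat.cast_nonneg _),
      inv_mul_cancel₀ (mod_cast k.factorial_ne_zero)]
  · rw [mul_zero]

end Hermite

section TensorPolynomial

variable {σ R : Type*} [Fintype σ] [CommRing R]

/-- The polynomial `∏ j, f j (X j)` in the variables indexed by `σ`, as a multilinear function of
the family `f` of univariate polynomials. -/
noncomputable def tensorPolynomial :
    MultilinearMap R (fun _ : σ => Polynomial R) (MvPolynomial σ R) :=
  (MultilinearMap.mkPiAlgebra R σ (MvPolynomial σ R)).compLinearMap fun j =>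
    (Polynomial.aeval (MvPolynomial.X j)).toLinearMap

theorem tensorPolynomial_apply (f : σ → Polynomial R) :
    tensorPolynomial f = ∏ j, Polynomial.aeval (MvPolynomial.X j : MvPolynomial σ R) (f j) := rfl

theorem eval_tensorPolynomial (f : σ → Polynomial R) (y : σ → R) :
    MvPolynomial.eval y (tensorPolynomial f) = ∏ j, (f j).eval (y j) := by
  rw [tensorPolynomial_apply, map_prod]
  refine Finset.prod_congr rfl fun j _ => ?_
  rw [← MvPolynomial.aeval_eq_eval, ← Polynomial.aeval_algHom_apply, MvPolynomial.aeval_X,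
    Polynomial.coe_aeval_eq_eval]

theorem totalDegree_tensorPolynomial_le (f : σ → Polynomial R) :
    (tensorPolynomial f).totalDegree ≤ ∑ j, (f j).natDegree := by
  rw [tensorPolynomial_apply]
  refine (MvPolynomial.totalDegree_finsetProd _ _).trans (Finset.sum_le_sum fun j _ => ?_)
  rw [Polynomial.aeval_eq_sum_range]
  refine MvPolynomial.totalDegree_finsetSum_le fun i hi => ?_
  refine (MvPolynomial.totalDegree_smul_le _ _).trans ?_
  rw [MvPolynomial.X_pow_eq_monomial]
  refine (MvPolynomial.totalDegree_monomial_le _ _).trans ?_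
  simpa using Finset.mem_range_succ_iff.1 hi

theorem monomial_eq_smul_tensorPolynomial (a : σ →₀ ℕ) (c : R) :
    MvPolynomial.monomial a c = c • tensorPolynomial fun j => Polynomial.X ^ a j := by
  simp only [MvPolynomial.monomial_eq, Finsupp.prod_pow, tensorPolynomial_apply, map_pow,
    Polynomial.aeval_X, MvPolynomial.smul_eq_C_mul]

theorem pderiv_aeval {τ : Type*} (k : τ) (g : σ → MvPolynomial τ R) (p : MvPolynomial σ R) :
    MvPolynomial.pderiv k (MvPolynomial.aeval g p)
      = ∑ j, MvPolynomial.pderiv k (g j) * MvPolynomial.aeval g (MvPolynomial.pderiv j p) := by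
  classical
  induction p using MvPolynomial.induction_on with
  | C c => simp [MvPolynomial.algebraMap_eq]
  | add p q hp hq => simp only [map_add, hp, hq, mul_add, Finset.sum_add_distrib]
  | mul_X p i hp =>
    simp only [map_mul, MvPolynomial.aeval_X, Derivation.leibniz, hp, MvPolynomial.pderiv_X,
      smul_eq_mul, map_add, mul_add, Finset.sum_add_distrib, Pi.single_apply, Finset.mul_sum]
    simp [mul_comm, mul_assoc, apply_ite]

variable [DecidableEq σ]

theorem tensorPolynomial_update (f : σ → Polynomial R) (k : σ) (p : Polynomial R) :
    tensorPolynomial (Function.update f k p)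
      = Polynomial.aeval (MvPolynomial.X k : MvPolynomial σ R) p
        * ∏ j ∈ Finset.univ \ {k},
            Polynomial.aeval (MvPolynomial.X j : MvPolynomial σ R) (f j) := by
  simp only [tensorPolynomial_apply, Function.apply_update
    (fun j => Polynomial.aeval (R := R) (MvPolynomial.X j : MvPolynomial σ R))]
  exact Finset.prod_update_of_mem (Finset.mem_univ k) _ _

theorem X_mul_tensorPolynomial (k : σ) (f : σ → Polynomial R) :
    MvPolynomial.X k * tensorPolynomial f
      = tensorPolynomial (Function.update f k (Polynomial.X * f k)) := by
  conv_lhs => rw [← Function.update_eq_self k f]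
  rw [tensorPolynomial_update, tensorPolynomial_update, map_mul, Polynomial.aeval_X, mul_assoc]

theorem pderiv_tensorPolynomial (k : σ) (f : σ → Polynomial R) :
    MvPolynomial.pderiv k (tensorPolynomial f)
      = tensorPolynomial (Function.update f k (Polynomial.derivative (f k))) := by
  have hconst : MvPolynomial.pderiv k (∏ j ∈ Finset.univ \ {k},
      Polynomial.aeval (MvPolynomial.X j : MvPolynomial σ R) (f j)) = 0 := by
    refine Finset.prod_induction _ (fun p => MvPolynomial.pderiv k p = 0)
      (fun p q hp hq => by rw [Derivation.leibniz, hp, hq, smul_zero, smul_zero, add_zero])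
      (Derivation.map_one_eq_zero _) fun j hj => ?_
    rw [Derivation.map_aeval, MvPolynomial.pderiv_X_of_ne (by simpa using hj), smul_zero]
  conv_lhs => rw [← Function.update_eq_self k f]
  rw [tensorPolynomial_update, tensorPolynomial_update, Derivation.leibniz, hconst, smul_zero,
    zero_add, Derivation.map_aeval, MvPolynomial.pderiv_X_self, smul_eq_mul, smul_eq_mul, mul_one,
    mul_comm]

end TensorPolynomial

section MultivariateGaussian

/-- The standard Gaussian measure on `σ → ℝ`. -/
noncomputable abbrev gaussianPi (σ : Type*) [Fintype σ] : Measure (σ → ℝ) :=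
  Measure.pi fun _ => gaussianReal 0 1

variable {σ τ : Type*} [Fintype τ]

/-- Substitution of the affine map `z ↦ m + L *ᵥ z` into a polynomial. -/
noncomputable def affineSubst (m : σ → ℝ) (L : Matrix σ τ ℝ) :
    MvPolynomial σ ℝ →ₐ[ℝ] MvPolynomial τ ℝ :=
  MvPolynomial.aeval fun j => MvPolynomial.C (m j) + ∑ k, MvPolynomial.C (L j k) * MvPolynomial.X k

theorem eval_affineSubst (m : σ → ℝ) (L : Matrix σ τ ℝ) (p : MvPolynomial σ ℝ) (z : τ → ℝ) :
    MvPolynomial.eval z (affineSubst m L p) = MvPolynomial.eval (m + L *ᵥ z) p := by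
  rw [affineSubst, ← MvPolynomial.aeval_eq_eval, MvPolynomial.comp_aeval_apply,
    MvPolynomial.aeval_eq_eval]
  congr 2
  ext j
  simp [Matrix.mulVec, dotProduct]

theorem integrable_eval_gaussianPi (p : MvPolynomial τ ℝ) :
    Integrable (fun x => MvPolynomial.eval x p) (gaussianPi τ) := by
  induction p using MvPolynomial.induction_on' with
  | add p q hp hq => exact (hp.add hq).congr (by simp [Pi.add_def])
  | monomial a c =>
    simp only [MvPolynomial.eval_monomial, Finsupp.prod_pow]
    exact (Integrable.fintype_prod fun j => integrable_pow_gaussianReal (a j)).const_mul c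

theorem integrable_eval_add_mulVec (m : σ → ℝ) (L : Matrix σ τ ℝ) (p : MvPolynomial σ ℝ) :
    Integrable (fun z => MvPolynomial.eval (m + L *ᵥ z) p) (gaussianPi τ) := by
  simpa only [eval_affineSubst] using integrable_eval_gaussianPi (affineSubst m L p)

variable [Fintype σ]

theorem integral_eval_tensorPolynomial (f : σ → Polynomial ℝ) :
    ∫ x, MvPolynomial.eval x (tensorPolynomial f) ∂gaussianPi σ
      = ∏ j, ∫ x, (f j).eval x ∂gaussianReal 0 1 := by
  simp only [eval_tensorPolynomial]
  exact integral_fintype_prod_eq_prod fun j x => (f j).eval x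

theorem integral_mul_eval_gaussianPi (k : σ) (p : MvPolynomial σ ℝ) :
    ∫ x, x k * MvPolynomial.eval x p ∂gaussianPi σ
      = ∫ x, MvPolynomial.eval x (MvPolynomial.pderiv k p) ∂gaussianPi σ := by
  have hX (q : MvPolynomial σ ℝ) (x : σ → ℝ) :
      x k * MvPolynomial.eval x q = MvPolynomial.eval x (MvPolynomial.X k * q) := by simp
  classical
  induction p using MvPolynomial.induction_on' with
  | add p q hp hq =>
    simp only [hX, mul_add, map_add] at hp hq ⊢
    rw [integral_add (integrable_eval_gaussianPi _) (integrable_eval_gaussianPi _),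
      integral_add (integrable_eval_gaussianPi _) (integrable_eval_gaussianPi _), hp, hq]
  | monomial a c =>
    simp only [hX]
    simp only [monomial_eq_smul_tensorPolynomial, mul_smul_comm, Derivation.map_smul,
      X_mul_tensorPolynomial, pderiv_tensorPolynomial, MvPolynomial.smul_eval, integral_const_mul,
      integral_eval_tensorPolynomial,
      Function.apply_update (fun _ (q : Polynomial ℝ) => ∫ x, q.eval x ∂gaussianReal 0 1),
      Polynomial.eval_mul, Polynomial.eval_X, integral_mul_eval_gaussianReal]

theorem pderiv_affineSubst (m : σ → ℝ) (L : Matrix σ τ ℝ) (k : τ)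
    (p : MvPolynomial σ ℝ) :
    MvPolynomial.pderiv k (affineSubst m L p)
      = ∑ j, L j k • affineSubst m L (MvPolynomial.pderiv j p) := by
  classical
  rw [affineSubst, pderiv_aeval]
  refine Finset.sum_congr rfl fun j _ => ?_
  simp [MvPolynomial.pderiv_X, Pi.single_apply, MvPolynomial.smul_eq_C_mul]

theorem integral_mulVec_mul_eval_add_mulVec (m : σ → ℝ) (L : Matrix σ τ ℝ) (j : σ)
    (p : MvPolynomial σ ℝ) :
    ∫ z, (L *ᵥ z) j * MvPolynomial.eval (m + L *ᵥ z) p ∂gaussianPi τ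
      = ∑ k, (L * Lᵀ) j k * ∫ z, MvPolynomial.eval (m + L *ᵥ z) (MvPolynomial.pderiv k p)
          ∂gaussianPi τ := by
  have hint (l : τ) :
      Integrable (fun z : τ → ℝ => z l * MvPolynomial.eval (m + L *ᵥ z) p) (gaussianPi τ) := by
    refine (integrable_eval_gaussianPi (MvPolynomial.X l * affineSubst m L p)).congr ?_
    exact .of_forall fun z => by simp [eval_affineSubst]
  have hstein (l : τ) :
      ∫ z, z l * MvPolynomial.eval (m + L *ᵥ z) p ∂gaussianPi τ
        = ∑ k, L k l * ∫ z, MvPolynomial.eval (m + L *ᵥ z) (MvPolynomial.pderiv k p)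
          ∂gaussianPi τ := by
    simp only [← eval_affineSubst, integral_mul_eval_gaussianPi, pderiv_affineSubst, map_sum,
      MvPolynomial.smul_eval]
    rw [integral_finsetSum _ fun k _ => (integrable_eval_gaussianPi _).const_mul _]
    simp only [integral_const_mul]
  calc ∫ z, (L *ᵥ z) j * MvPolynomial.eval (m + L *ᵥ z) p ∂gaussianPi τ
      = ∑ l, L j l * ∫ z, z l * MvPolynomial.eval (m + L *ᵥ z) p ∂gaussianPi τ := by
        have hmulVec (z : τ → ℝ) : (L *ᵥ z) j = ∑ l, L j l * z l := rfl
        simp only [hmulVec, Finset.sum_mul, mul_assoc]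
        rw [integral_finsetSum _ fun l _ => (hint l).const_mul _]
        simp only [integral_const_mul]
    _ = _ := by
        simp only [hstein, Matrix.mul_apply, Matrix.transpose_apply, Finset.mul_sum,
          Finset.sum_mul, ← mul_assoc]
        exact Finset.sum_comm

end MultivariateGaussian

section MultiIndex

variable {σ : Type*} [DecidableEq σ]

theorem exists_eq_add_single {a : σ → ℕ} {k : σ} (hk : a k ≠ 0) :
    ∃ b : σ → ℕ, a = b + Pi.single k 1 := by
  refine ⟨a - Pi.single k 1, (tsub_add_cancel_of_le fun j => ?_).symm⟩
  rcases eq_or_ne j k with rfl | hjk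
  · simpa [Nat.one_le_iff_ne_zero] using hk
  · simp [hjk]

variable [Fintype σ]

theorem sum_add_single (a : σ → ℕ) (k : σ) :
    ∑ j, (a + Pi.single k 1 : σ → ℕ) j = ∑ j, a j + 1 := by
  simp [Finset.sum_add_distrib]

theorem prod_pow_add_single {M : Type*} [CommMonoid M] (u : σ → M) (a : σ → ℕ) (k : σ) :
    ∏ j, u j ^ (a + Pi.single k 1 : σ → ℕ) j = u k * ∏ j, u j ^ a j := by
  simp only [Pi.add_apply, pow_add, Finset.prod_mul_distrib, Pi.single_apply, pow_ite, pow_one,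
    pow_zero, Finset.prod_ite_eq', Finset.mem_univ, if_true, mul_comm]

end MultiIndex

section MvHermite

variable {σ : Type*} [Fintype σ]

/-- The multivariate probabilists' Hermite polynomial `∏ j, H_{a j}(X j)` of multi-index `a`. -/
noncomputable def mvHermite (a : σ → ℕ) : MvPolynomial σ ℝ :=
  tensorPolynomial fun j => realHermite (a j)

theorem mvHermite_zero : mvHermite (0 : σ → ℕ) = 1 := by
  simp [mvHermite, tensorPolynomial_apply]

theorem totalDegree_mvHermite_le (a : σ → ℕ) : (mvHermite a).totalDegree ≤ ∑ j, a j := by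
  simpa only [natDegree_realHermite, mvHermite] using
    totalDegree_tensorPolynomial_le fun j => realHermite (a j)

theorem mvHermite_add_single [DecidableEq σ] (a : σ → ℕ) (k : σ) :
    mvHermite (a + Pi.single k 1)
      = MvPolynomial.X k * mvHermite a - MvPolynomial.pderiv k (mvHermite a) := by
  have hupdate : (fun j => realHermite ((a + Pi.single k 1 : σ → ℕ) j))
      = Function.update (fun j => realHermite (a j)) k (realHermite (a k + 1)) := by
    ext1 j
    rcases eq_or_ne j k with rfl | hjk <;> simp [*]
  rw [mvHermite, hupdate, realHermite_succ, MultilinearMap.map_update_sub,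
    ← X_mul_tensorPolynomial, ← pderiv_tensorPolynomial, mvHermite]

theorem pderiv_mvHermite [DecidableEq σ] (a : σ → ℕ) (k : σ) :
    MvPolynomial.pderiv k (mvHermite a) = (a k : ℝ) • mvHermite (a - Pi.single k 1) := by
  have hupdate : (fun j => realHermite ((a - Pi.single k 1 : σ → ℕ) j))
      = Function.update (fun j => realHermite (a j)) k (realHermite (a k - 1)) := by
    ext1 j
    rcases eq_or_ne j k with rfl | hjk <;> simp [*]
  rw [mvHermite, pderiv_tensorPolynomial, derivative_realHermite, MultilinearMap.map_update_smul,
    ← hupdate, mvHermite]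

theorem X_mul_mem_span_mvHermite {p : MvPolynomial σ ℝ} {d : ℕ}
    (hp : p ∈ Submodule.span ℝ (mvHermite '' {a : σ → ℕ | ∑ j, a j ≤ d})) (k : σ) :
    MvPolynomial.X k * p ∈ Submodule.span ℝ (mvHermite '' {a : σ → ℕ | ∑ j, a j ≤ d + 1}) := by
  classical
  induction hp using Submodule.span_induction with
  | zero => simp
  | add p q _ _ hp hq => simpa only [mul_add] using add_mem hp hq
  | smul c p _ hp => simpa only [mul_smul_comm] using Submodule.smul_mem _ c hp
  | mem p hp =>
    obtain ⟨a, ha, rfl⟩ := hp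
    rw [← sub_add_cancel (MvPolynomial.X k * mvHermite a), ← mvHermite_add_single,
      pderiv_mvHermite]
    refine add_mem (Submodule.subset_span ⟨_, ?_, rfl⟩)
      (Submodule.smul_mem _ _ (Submodule.subset_span ⟨_, ?_, rfl⟩))
    · exact (sum_add_single a k).trans_le (Nat.succ_le_succ ha)
    · exact (Finset.sum_le_sum fun j _ => Nat.sub_le _ _).trans (Nat.le_succ_of_le ha)

theorem monomial_mem_span_mvHermite (a : σ →₀ ℕ) (c : ℝ) :
    MvPolynomial.monomial a c ∈ Submodule.span ℝ
      (mvHermite '' {b : σ → ℕ | ∑ j, b j ≤ (MvPolynomial.monomial a c).totalDegree}) := by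
  refine MvPolynomial.induction_on_monomial (motive := fun p =>
    p ∈ Submodule.span ℝ (mvHermite '' {b : σ → ℕ | ∑ j, b j ≤ p.totalDegree}))
    (fun c => ?_) (fun p k hp => ?_) a c
  · rw [MvPolynomial.C_eq_smul_one, ← mvHermite_zero]
    exact Submodule.smul_mem _ _ (Submodule.subset_span ⟨0, by simp, rfl⟩)
  · rcases eq_or_ne p 0 with rfl | hp0
    · simp
    · rw [MvPolynomial.totalDegree_mul_of_isDomain hp0 (MvPolynomial.X_ne_zero k),
        MvPolynomial.totalDegree_X, mul_comm]
      exact X_mul_mem_span_mvHermite hp k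

theorem mem_span_mvHermite {p : MvPolynomial σ ℝ} {d : ℕ} (hp : p.totalDegree ≤ d) :
    p ∈ Submodule.span ℝ (mvHermite '' {a : σ → ℕ | ∑ j, a j ≤ d}) := by
  rw [p.as_sum]
  refine sum_mem fun a ha => Submodule.span_mono (Set.image_mono fun b hb => ?_)
    (monomial_mem_span_mvHermite a _)
  exact (hb.trans (MvPolynomial.totalDegree_monomial_le _ _)).trans
    ((MvPolynomial.le_totalDegree ha).trans hp)

/-- The normalized multivariate Hermite polynomial `∏ j, h_{a j}(X j)`. -/
noncomputable def mvHermiteN (a : σ → ℕ) : MvPolynomial σ ℝ :=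
  (∏ j, √((a j).factorial : ℝ))⁻¹ • mvHermite a

theorem eval_mvHermiteN (a : σ → ℕ) (y : σ → ℝ) :
    MvPolynomial.eval y (mvHermiteN a) = ∏ j, hermiteN (a j) (y j) := by
  simp only [mvHermiteN, MvPolynomial.smul_eval, mvHermite, eval_tensorPolynomial,
    hermiteN_eq_eval, Finset.prod_mul_distrib, Finset.prod_inv_distrib]

theorem prod_sqrt_factorial_ne_zero (a : σ → ℕ) : ∏ j, √((a j).factorial : ℝ) ≠ 0 :=
  Finset.prod_ne_zero_iff.2 fun j _ => sqrt_factorial_ne_zero (a j)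

theorem totalDegree_mvHermiteN_le (a : σ → ℕ) : (mvHermiteN a).totalDegree ≤ ∑ j, a j :=
  (MvPolynomial.totalDegree_smul_le _ _).trans (totalDegree_mvHermite_le a)

theorem mem_span_mvHermiteN {p : MvPolynomial σ ℝ} {d : ℕ} (hp : p.totalDegree ≤ d) :
    p ∈ Submodule.span ℝ (mvHermiteN '' {a : σ → ℕ | ∑ j, a j ≤ d}) := by
  refine Submodule.span_le.2 ?_ (mem_span_mvHermite hp)
  rintro _ ⟨a, ha, rfl⟩
  have hscale : mvHermite a = (∏ j, √((a j).factorial : ℝ)) • mvHermiteN a := by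
    rw [mvHermiteN, smul_inv_smul₀ (prod_sqrt_factorial_ne_zero a)]
  rw [SetLike.mem_coe, hscale]
  exact Submodule.smul_mem _ _ (Submodule.subset_span ⟨a, ha, rfl⟩)

theorem integrable_mvHermiteN_mul_mvHermiteN (a b : σ → ℕ) :
    Integrable (fun y => MvPolynomial.eval y (mvHermiteN a) * MvPolynomial.eval y (mvHermiteN b))
      (gaussianPi σ) := by
  simpa only [map_mul] using integrable_eval_gaussianPi (mvHermiteN a * mvHermiteN b)

theorem integral_mvHermiteN_mul_mvHermiteN (a b : σ → ℕ) :
    ∫ y, MvPolynomial.eval y (mvHermiteN a) * MvPolynomial.eval y (mvHermiteN b) ∂gaussianPi σ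
      = if a = b then 1 else 0 := by
  simp only [eval_mvHermiteN, ← Finset.prod_mul_distrib]
  rw [integral_fintype_prod_eq_prod fun j y => hermiteN (a j) y * hermiteN (b j) y]
  simp only [integral_hermiteN_mul_hermiteN, Finset.prod_ite_zero, Finset.prod_const_one,
    Finset.mem_univ, forall_true_left, funext_iff]

theorem integral_sq_sum_smul_mvHermiteN (T : Finset (σ → ℕ)) (g : (σ → ℕ) → ℝ) :
    ∫ y, MvPolynomial.eval y (∑ a ∈ T, g a • mvHermiteN a) ^ 2 ∂gaussianPi σ
      = ∑ a ∈ T, g a ^ 2 := by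
  classical
  have hint (a b : σ → ℕ) := (integrable_mvHermiteN_mul_mvHermiteN a b).const_mul (g a * g b)
  simp only [map_sum, MvPolynomial.smul_eval, pow_two, Finset.sum_mul_sum, mul_mul_mul_comm]
  rw [integral_finsetSum _ fun a _ => integrable_finsetSum _ fun b _ => hint a b]
  refine Finset.sum_congr rfl fun a ha => ?_
  rw [integral_finsetSum _ fun b _ => hint a b]
  simp [integral_const_mul, integral_mvHermiteN_mul_mvHermiteN, ha]

theorem sum_smul_mvHermiteN_eq_zero_iff (T : Finset (σ → ℕ)) (g : (σ → ℕ) → ℝ) :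
    ∑ a ∈ T, g a • mvHermiteN a = 0 ↔ ∑ a ∈ T, g a ^ 2 = 0 := by
  refine ⟨fun h => ?_, fun h => Finset.sum_eq_zero fun a ha => ?_⟩
  · rw [← integral_sq_sum_smul_mvHermiteN, h]
    simp
  · rw [Finset.sum_eq_zero_iff_of_nonneg fun _ _ => sq_nonneg _] at h
    rw [pow_eq_zero_iff two_ne_zero |>.1 (h a ha), zero_smul]

end MvHermite

section PlantedRow

variable {κ : Type*} [Fintype κ] {u : κ → ℝ}

/-- The planted row `x • u + (z - ⟨z, u⟩ • u)`: for a unit vector `u` and standard Gaussian noise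
`z`, its law is `N(x u, I - uuᵀ)`. -/
def plantedRow (u : κ → ℝ) (x : ℝ) (z : κ → ℝ) : κ → ℝ :=
  fun j => x * u j + z j - (∑ l, z l * u l) * u j

theorem plantedRow_eq_add_mulVec [DecidableEq κ] (u : κ → ℝ) (x : ℝ) (z : κ → ℝ) :
    plantedRow u x z = x • u + (1 - vecMulVec u u) *ᵥ z := by
  ext j
  simp only [plantedRow, sub_mulVec, one_mulVec, vecMulVec_mulVec, op_smul_eq_smul, Pi.add_apply,
    Pi.sub_apply, Pi.smul_apply, smul_eq_mul, dotProduct, mul_comm (u _)]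
  ring

theorem one_sub_vecMulVec_mul_transpose [DecidableEq κ] (hu : u ⬝ᵥ u = 1) :
    (1 - vecMulVec u u) * (1 - vecMulVec u u)ᵀ = 1 - vecMulVec u u := by
  rw [transpose_sub, transpose_one, transpose_vecMulVec]
  simp [sub_mul, mul_sub, vecMulVec_mul_vecMulVec, hu]

theorem integrable_eval_plantedRow (u : κ → ℝ) (x : ℝ) (p : MvPolynomial κ ℝ) :
    Integrable (fun z => MvPolynomial.eval (plantedRow u x z) p) (gaussianPi κ) := by
  classical
  simpa only [plantedRow_eq_add_mulVec] using integrable_eval_add_mulVec (x • u) _ p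

-- The isotropic part of the noise covariance `I - uuᵀ` cancels `∂_k`.
theorem integral_raise_plantedRow (hu : u ⬝ᵥ u = 1) (x : ℝ) (k : κ) (p : MvPolynomial κ ℝ) :
    ∫ z, MvPolynomial.eval (plantedRow u x z) (MvPolynomial.X k * p - MvPolynomial.pderiv k p)
        ∂gaussianPi κ
      = u k * (x * ∫ z, MvPolynomial.eval (plantedRow u x z) p ∂gaussianPi κ
        - ∑ j, u j * ∫ z, MvPolynomial.eval (plantedRow u x z) (MvPolynomial.pderiv j p)
          ∂gaussianPi κ) := by
  classical
  have hint (q : MvPolynomial κ ℝ) := integrable_eval_plantedRow u x q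
  have hnoise (z : κ → ℝ) : ((1 - vecMulVec u u) *ᵥ z) k * MvPolynomial.eval (plantedRow u x z) p
      = MvPolynomial.eval (plantedRow u x z) (MvPolynomial.X k * p)
        - x * u k * MvPolynomial.eval (plantedRow u x z) p := by
    simp [plantedRow_eq_add_mulVec, add_mul]
  have hstein := integral_mulVec_mul_eval_add_mulVec (x • u) (1 - vecMulVec u u) k p
  simp only [← plantedRow_eq_add_mulVec, hnoise, one_sub_vecMulVec_mul_transpose hu,
    Matrix.sub_apply, Matrix.one_apply, vecMulVec_apply, sub_mul, ite_mul, one_mul, zero_mul,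
    Finset.sum_sub_distrib, Finset.sum_ite_eq, Finset.mem_univ, if_true, mul_assoc (u k),
    ← Finset.mul_sum] at hstein
  rw [integral_sub (hint _) ((hint _).const_mul _), integral_const_mul] at hstein
  simp only [map_sub]
  rw [integral_sub (hint _) (hint _)]
  linarith

theorem integral_mvHermite_plantedRow (hu : u ⬝ᵥ u = 1) (x : ℝ) (a : κ → ℕ) :
    ∫ z, MvPolynomial.eval (plantedRow u x z) (mvHermite a) ∂gaussianPi κ
      = (∏ j, u j ^ a j) * (realHermite (∑ j, a j)).eval x := by
  classical
  induction hd : ∑ j, a j using Nat.strong_induction_on generalizing a with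
  | _ d ih =>
    rcases eq_or_ne a 0 with rfl | ha
    · simp [← hd, mvHermite_zero]
    obtain ⟨k, hk⟩ := Function.ne_iff.1 ha
    obtain ⟨b, rfl⟩ := exists_eq_add_single hk
    rw [sum_add_single] at hd
    have hlower (j : κ) :
        u j * ∫ z, MvPolynomial.eval (plantedRow u x z) (MvPolynomial.pderiv j (mvHermite b))
            ∂gaussianPi κ
          = b j * ((∏ l, u l ^ b l) * (realHermite (∑ l, b l - 1)).eval x) := by
      rcases eq_or_ne (b j) 0 with hbj | hbj
      · simp [pderiv_mvHermite, hbj]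
      obtain ⟨c, rfl⟩ := exists_eq_add_single hbj
      rw [sum_add_single] at hd
      simp only [pderiv_mvHermite, add_tsub_cancel_right, MvPolynomial.smul_eval,
        integral_const_mul, ih (∑ l, c l) (by omega) c rfl, prod_pow_add_single, sum_add_single]
      ring
    rw [mvHermite_add_single, integral_raise_plantedRow hu, ih (∑ l, b l) (by omega) b rfl]
    simp only [hlower, ← Finset.sum_mul, ← Nat.cast_sum]
    rw [prod_pow_add_single, ← hd, realHermite_succ, derivative_realHermite]
    simp only [Polynomial.eval_sub, Polynomial.eval_mul, Polynomial.eval_X, Polynomial.eval_smul,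
      smul_eq_mul]
    ring

theorem integral_prod_hermiteN_plantedRow (hu : u ⬝ᵥ u = 1) (x : ℝ) (a : κ → ℕ) :
    ∫ z, ∏ j, hermiteN (a j) (plantedRow u x z j) ∂gaussianPi κ
      = (∏ j, u j ^ a j) * (√(Nat.multinomial Finset.univ a : ℝ) * hermiteN (∑ j, a j) x) := by
  have hmultinomial : (∏ j, √((a j).factorial : ℝ)) * √(Nat.multinomial Finset.univ a : ℝ)
      = √((∑ j, a j).factorial : ℝ) := by
    rw [← Nat.multinomial_spec, Nat.cast_mul, Real.sqrt_mul (Nat.cast_nonneg _), Nat.cast_prod,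
      Real.sqrt_prod _ fun _ _ => Nat.cast_nonneg _]
  have hprod := prod_sqrt_factorial_ne_zero a
  have hsum := sqrt_factorial_ne_zero (∑ j, a j)
  simp only [← eval_mvHermiteN, mvHermiteN, MvPolynomial.smul_eval, integral_const_mul]
  rw [integral_mvHermite_plantedRow hu, hermiteN_eq_eval]
  field_simp
  rw [← hmultinomial]
  ring

end PlantedRow

section Advantage

theorem isGreatest_sum_mul_div_sqrt_sum_sq {ι : Type*} {T : Finset ι} (hT : T.Nonempty)
    (c : ι → ℝ) :
    IsGreatest {r | ∃ g : ι → ℝ, ∑ a ∈ T, g a ^ 2 ≠ 0 ∧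
      r = (∑ a ∈ T, g a * c a) / √(∑ a ∈ T, g a ^ 2)} (√(∑ a ∈ T, c a ^ 2)) := by
  constructor
  · rcases eq_or_ne (∑ a ∈ T, c a ^ 2) 0 with hc | hc
    · rw [Finset.sum_eq_zero_iff_of_nonneg fun _ _ => sq_nonneg _] at hc
      have hc0 (a) (ha : a ∈ T) : c a = 0 := pow_eq_zero_iff two_ne_zero |>.1 (hc a ha)
      refine ⟨1, by simp [hT.ne_empty], ?_⟩
      rw [Finset.sum_congr rfl hc]
      simp [Finset.sum_congr rfl hc0]
    · refine ⟨c, hc, ?_⟩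
      simp only [← pow_two, Real.div_sqrt]
  · rintro _ ⟨g, -, rfl⟩
    refine div_le_of_le_mul₀ (Real.sqrt_nonneg _) (Real.sqrt_nonneg _) ?_
    rw [mul_comm]
    exact Real.sum_mul_le_sqrt_mul_sqrt _ _ _

variable {Ω σ : Type*} [MeasurableSpace Ω] [Fintype σ]

/-- The degree-`D` advantage `sup 𝔼_P[f(Y)] / √𝔼_Q[f(Y)²]` of an observation `Y`, over nonzero real
polynomials `f` of degree at most `D`. -/
noncomputable def lowDegreeAdvantage (D : ℕ) (Y : Ω → σ → ℝ) (P Q : Measure Ω) : ℝ :=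
  sSup {r | ∃ f : MvPolynomial σ ℝ, f.totalDegree ≤ D ∧ f ≠ 0 ∧
    r = (∫ ω, MvPolynomial.eval (Y ω) f ∂P) / √(∫ ω, MvPolynomial.eval (Y ω) f ^ 2 ∂Q)}

variable [DecidableEq σ]

/-- The multi-indices over `σ` of total degree at most `D`. -/
def multiIndicesLE (σ : Type*) [Fintype σ] [DecidableEq σ] (D : ℕ) : Finset (σ → ℕ) :=
  (Finset.range (D + 1)).biUnion fun d => Finset.univ.piAntidiag d

theorem mem_multiIndicesLE {D : ℕ} {a : σ → ℕ} : a ∈ multiIndicesLE σ D ↔ ∑ j, a j ≤ D := by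
  simp [multiIndicesLE]

theorem totalDegree_le_iff_exists_eq_sum_mvHermiteN {D : ℕ} {f : MvPolynomial σ ℝ} :
    f.totalDegree ≤ D ↔ ∃ g : (σ → ℕ) → ℝ, f = ∑ a ∈ multiIndicesLE σ D, g a • mvHermiteN a := by
  constructor
  · intro hf
    have hspan := mem_span_mvHermiteN hf
    simp only [← mem_multiIndicesLE] at hspan
    obtain ⟨g, hg⟩ := (Submodule.mem_span_image_finset_iff_exists_fun' ℝ).1 hspan
    exact ⟨g, hg.symm⟩
  · rintro ⟨g, rfl⟩
    refine MvPolynomial.totalDegree_finsetSum_le fun a ha => ?_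
    exact (MvPolynomial.totalDegree_smul_le _ _).trans
      ((totalDegree_mvHermiteN_le a).trans (mem_multiIndicesLE.1 ha))

theorem lowDegreeAdvantage_sq_eq_sum {D : ℕ} {Y : Ω → σ → ℝ} {P Q : Measure Ω}
    (hQ : HasLaw Y (gaussianPi σ) Q)
    (hP : ∀ a ∈ multiIndicesLE σ D, Integrable (fun ω => ∏ j, hermiteN (a j) (Y ω j)) P) :
    lowDegreeAdvantage D Y P Q ^ 2
      = ∑ a ∈ multiIndicesLE σ D, (∫ ω, ∏ j, hermiteN (a j) (Y ω j) ∂P) ^ 2 := by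
  have hsq (f : MvPolynomial σ ℝ) : ∫ ω, MvPolynomial.eval (Y ω) f ^ 2 ∂Q
      = ∫ y, MvPolynomial.eval y f ^ 2 ∂gaussianPi σ :=
    hQ.integral_comp (f := fun y => MvPolynomial.eval y f ^ 2)
      ((MvPolynomial.continuous_eval f).pow 2).aestronglyMeasurable
  have hlin (g : (σ → ℕ) → ℝ) :
      ∫ ω, MvPolynomial.eval (Y ω) (∑ a ∈ multiIndicesLE σ D, g a • mvHermiteN a) ∂P
        = ∑ a ∈ multiIndicesLE σ D, g a * ∫ ω, ∏ j, hermiteN (a j) (Y ω j) ∂P := by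
    simp only [map_sum, MvPolynomial.smul_eval, eval_mvHermiteN]
    rw [integral_finsetSum _ fun a ha => (hP a ha).const_mul _]
    simp only [integral_const_mul]
  have hT : (multiIndicesLE σ D).Nonempty := ⟨0, mem_multiIndicesLE.2 (by simp)⟩
  have hmax := isGreatest_sum_mul_div_sqrt_sum_sq hT fun a =>
    ∫ ω, ∏ j, hermiteN (a j) (Y ω j) ∂P
  rw [← Real.sq_sqrt (Finset.sum_nonneg fun _ _ => sq_nonneg _), ← hmax.csSup_eq,
    lowDegreeAdvantage]
  congr 2
  ext r
  constructor
  · rintro ⟨f, hf, hf0, rfl⟩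
    obtain ⟨g, rfl⟩ := totalDegree_le_iff_exists_eq_sum_mvHermiteN.1 hf
    exact ⟨g, (sum_smul_mvHermiteN_eq_zero_iff _ g).not.1 hf0,
      by rw [hlin, hsq, integral_sq_sum_smul_mvHermiteN]⟩
  · rintro ⟨g, hg, rfl⟩
    exact ⟨_, totalDegree_le_iff_exists_eq_sum_mvHermiteN.2 ⟨g, rfl⟩,
      (sum_smul_mvHermiteN_eq_zero_iff _ g).not.2 hg,
      by rw [hlin, hsq, integral_sq_sum_smul_mvHermiteN]⟩

end Advantage

section PlantedModel

variable {ι κ : Type*} [Fintype κ]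

/-- The array whose `i`-th row is the planted row with spike `u`, coefficient `x i` and noise
`z i`, as a function of `((u, x), z)`. -/
def plantedArray (w : ((κ → ℝ) × (ι → ℝ)) × (ι → κ → ℝ)) : ι → κ → ℝ :=
  fun i => plantedRow w.1.1 (w.1.2 i) (w.2 i)

theorem continuous_plantedArray : Continuous (plantedArray (ι := ι) (κ := κ)) := by
  unfold plantedArray plantedRow
  fun_prop

variable [Fintype ι]

/-- The null distribution `𝒬`: `ι × κ` arrays with independent standard Gaussian entries. -/
noncomputable abbrev nullMeasure (ι κ : Type*) [Fintype ι] [Fintype κ] : Measure (ι → κ → ℝ) :=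
  Measure.pi fun _ => gaussianPi κ

/-- The joint law of the spike `u`, the coefficients `x i` and the noise rows `z i` from which a
planted array is built; the law of `x i` may depend on `i`. -/
noncomputable def plantedSource (μU : Measure (κ → ℝ)) (ν : ι → Measure ℝ) :
    Measure (((κ → ℝ) × (ι → ℝ)) × (ι → κ → ℝ)) :=
  (μU.prod (Measure.pi ν)).prod (nullMeasure ι κ)

/-- The planted distribution `𝒫`. -/
noncomputable def plantedMeasure (μU : Measure (κ → ℝ)) (ν : ι → Measure ℝ) :
    Measure (ι → κ → ℝ) :=
  (plantedSource μU ν).map plantedArray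

theorem hasLaw_uncurry_nullMeasure :
    HasLaw (fun (Y : ι → κ → ℝ) (q : ι × κ) => Y q.1 q.2) (gaussianPi (ι × κ))
      (nullMeasure ι κ) := by
  have hmeas : Measurable fun (Y : ι → κ → ℝ) (q : ι × κ) => Y q.1 q.2 := by fun_prop
  refine ⟨hmeas.aemeasurable, (Measure.pi_eq fun s hs => ?_).symm⟩
  have hpreimage : (fun (Y : ι → κ → ℝ) (q : ι × κ) => Y q.1 q.2) ⁻¹' Set.univ.pi s
      = Set.univ.pi fun i => Set.univ.pi fun j => s (i, j) := by
    ext Y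
    simp [Prod.forall]
  rw [Measure.map_apply hmeas (.univ_pi hs), hpreimage, nullMeasure]
  simp only [Measure.pi_pi, Fintype.prod_prod_type]

theorem abs_le_one_of_dotProduct_self_eq_one {u : κ → ℝ} (hu : u ⬝ᵥ u = 1) (j : κ) : |u j| ≤ 1 := by
  rw [← sq_le_one_iff_abs_le_one, pow_two, ← hu]
  exact Finset.single_le_sum (f := fun i => u i * u i) (fun i _ => mul_self_nonneg _)
    (Finset.mem_univ j)

theorem one_add_sum_le_prod_one_add {α : Type*} (s : Finset α) {f : α → ℝ} (hf : ∀ i, 0 ≤ f i) :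
    1 + ∑ i ∈ s, f i ≤ ∏ i ∈ s, (1 + f i) := by
  classical
  induction s using Finset.induction_on with
  | empty => simp
  | insert j s hj ih =>
    rw [Finset.sum_insert hj, Finset.prod_insert hj]
    nlinarith [hf j, mul_nonneg (hf j) (Finset.sum_nonneg fun i (_ : i ∈ s) => hf i)]

theorem exists_abs_hermiteN_le (k : ℕ) :
    ∃ C : ℝ, 0 ≤ C ∧ ∀ y : ℝ, |hermiteN k y| ≤ C * (1 + |y|) ^ k := by
  refine ⟨(√(k.factorial : ℝ))⁻¹ * ∑ i ∈ Finset.range (k + 1), |(realHermite k).coeff i|,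
    by positivity, fun y => ?_⟩
  rw [hermiteN_eq_eval, abs_mul, abs_of_nonneg (by positivity), mul_assoc]
  gcongr
  rw [Polynomial.eval_eq_sum_range, natDegree_realHermite, Finset.sum_mul]
  refine (Finset.abs_sum_le_sum_abs _ _).trans (Finset.sum_le_sum fun i hi => ?_)
  rw [abs_mul, abs_pow]
  gcongr
  calc |y| ^ i ≤ (1 + |y|) ^ i := by gcongr; linarith
    _ ≤ (1 + |y|) ^ k := pow_le_pow_right₀ (by linarith [abs_nonneg y])
      (Finset.mem_range_succ_iff.1 hi)

theorem one_add_abs_plantedRow_le {u : κ → ℝ} (hu : u ⬝ᵥ u = 1) (x : ℝ) (z : κ → ℝ) (j : κ) :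
    1 + |plantedRow u x z j| ≤ (1 + |x|) * (∏ l, (1 + |z l|)) ^ 2 := by
  have hmul (t : ℝ) (l : κ) : |t * u l| ≤ |t| := by
    rw [abs_mul]
    exact mul_le_of_le_one_right (abs_nonneg t) (abs_le_one_of_dotProduct_self_eq_one hu l)
  set s := ∑ l, |z l|
  have hs : 0 ≤ s := Finset.sum_nonneg fun l _ => abs_nonneg (z l)
  have hproj : |∑ l, z l * u l| ≤ s :=
    (Finset.abs_sum_le_sum_abs _ _).trans (Finset.sum_le_sum fun l _ => hmul _ l)
  have hz : |z j| ≤ s :=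
    Finset.single_le_sum (f := fun l => |z l|) (fun l _ => abs_nonneg _) (Finset.mem_univ j)
  calc 1 + |plantedRow u x z j|
      ≤ 1 + (|x * u j| + |z j| + |(∑ l, z l * u l) * u j|) := by
        gcongr
        exact (abs_sub _ _).trans (add_le_add_left (abs_add_le _ _) _)
    _ ≤ 1 + (|x| + s + s) := by
        exact add_le_add_right
          (add_le_add (add_le_add (hmul x j) hz) ((hmul _ j).trans hproj)) 1
    _ ≤ (1 + |x|) * (1 + s) ^ 2 := by
        nlinarith [mul_nonneg (abs_nonneg x) hs, mul_nonneg (abs_nonneg x) (sq_nonneg s),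
          sq_nonneg s]
    _ ≤ (1 + |x|) * (∏ l, (1 + |z l|)) ^ 2 := by
        gcongr
        exact one_add_sum_le_prod_one_add Finset.univ fun l => abs_nonneg (z l)

theorem integrable_one_add_abs_pow {ν : Measure ℝ} {D : ℕ}
    (hmom : ∀ k : ℕ, k ≤ D → Integrable (fun x : ℝ => |x| ^ k) ν) {k : ℕ} (hk : k ≤ D) :
    Integrable (fun x : ℝ => (1 + |x|) ^ k) ν := by
  simp only [add_pow, one_pow, one_mul]
  exact integrable_finsetSum _ fun i _ =>
    (hmom (k - i) ((Nat.sub_le _ _).trans hk)).mul_const _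


theorem exists_abs_prod_hermiteN_plantedRow_le (a : κ → ℕ) :
    ∃ C : ℝ, ∀ u : κ → ℝ, u ⬝ᵥ u = 1 → ∀ (x : ℝ) (z : κ → ℝ),
      |∏ j, hermiteN (a j) (plantedRow u x z j)|
        ≤ C * ((1 + |x|) ^ (∑ j, a j) * ∏ l, (1 + |z l|) ^ (2 * ∑ j, a j)) := by
  choose C hC0 hC using exists_abs_hermiteN_le
  refine ⟨∏ j, C (a j), fun u hu x z => ?_⟩
  have hpow : (1 + |x|) ^ (∑ j, a j) * ∏ l, (1 + |z l|) ^ (2 * ∑ j, a j)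
      = ∏ j, ((1 + |x|) * (∏ l, (1 + |z l|)) ^ 2) ^ a j := by
    rw [Finset.prod_pow_eq_pow_sum, mul_pow, ← pow_mul, Finset.prod_pow]
  rw [hpow, Finset.abs_prod, ← Finset.prod_mul_distrib]
  gcongr with j
  refine (hC _ _).trans ?_
  gcongr
  · exact hC0 _
  · exact one_add_abs_plantedRow_le hu x z j

variable {μU : Measure (κ → ℝ)} [IsFiniteMeasure μU] {ν : ι → Measure ℝ} [∀ i, SigmaFinite (ν i)]
  {D : ℕ}

theorem integrable_prod_hermiteN_plantedArray (hu : ∀ᵐ u ∂μU, u ⬝ᵥ u = 1)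
    (hmom : ∀ i, ∀ k ≤ D, Integrable (fun x : ℝ => |x| ^ k) (ν i)) {A : ι → κ → ℕ}
    (hA : ∑ i, ∑ j, A i j ≤ D) :
    Integrable (fun w => ∏ i, ∏ j, hermiteN (A i j) (plantedArray w i j))
      (plantedSource μU ν) := by
  have hx : Integrable (fun x : ι → ℝ => ∏ i, (1 + |x i|) ^ ∑ j, A i j) (Measure.pi ν) :=
    Integrable.fintype_prod (f := fun i (x : ℝ) => (1 + |x|) ^ ∑ j, A i j) fun i =>
      integrable_one_add_abs_pow (hmom i) ((Finset.single_le_sum (f := fun i => ∑ j, A i j)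
        (fun _ _ => Nat.zero_le _) (Finset.mem_univ i)).trans hA)
  have hgauss (k : ℕ) : Integrable (fun z : ℝ => (1 + |z|) ^ k) (gaussianReal 0 1) :=
    integrable_one_add_abs_pow (fun m _ => by simpa using (integrable_pow_gaussianReal m).norm)
      le_rfl
  have hz : Integrable (fun z : ι → κ → ℝ => ∏ i, ∏ l, (1 + |z i l|) ^ (2 * ∑ j, A i j))
      (nullMeasure ι κ) :=
    Integrable.fintype_prod (f := fun i (z : κ → ℝ) => ∏ l, (1 + |z l|) ^ (2 * ∑ j, A i j))
      fun i => Integrable.fintype_prod (f := fun _ (z : ℝ) => (1 + |z|) ^ (2 * ∑ j, A i j))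
        fun _ => hgauss _
  choose C hC using fun i => exists_abs_prod_hermiteN_plantedRow_le (A i)
  refine (((hx.comp_snd μU).mul_prod hz).const_mul (∏ i, C i)).mono'
    (Continuous.aestronglyMeasurable ?_) ?_
  · exact continuous_finsetProd _ fun i _ => continuous_finsetProd _ fun j _ =>
      (continuous_hermiteN _).comp (continuous_apply_apply i j |>.comp continuous_plantedArray)
  · filter_upwards [Measure.quasiMeasurePreserving_fst.ae
      (Measure.quasiMeasurePreserving_fst.ae hu)] with w hw
    rw [Real.norm_eq_abs, Finset.abs_prod, ← Finset.prod_mul_distrib, ← Finset.prod_mul_distrib]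
    exact Finset.prod_le_prod (fun _ _ => abs_nonneg _) fun i _ => hC i _ hw _ _

theorem integrable_prod_hermiteN_plantedMeasure (hu : ∀ᵐ u ∂μU, u ⬝ᵥ u = 1)
    (hmom : ∀ i, ∀ k ≤ D, Integrable (fun x : ℝ => |x| ^ k) (ν i)) {A : ι → κ → ℕ}
    (hA : ∑ i, ∑ j, A i j ≤ D) :
    Integrable (fun Y => ∏ i, ∏ j, hermiteN (A i j) (Y i j)) (plantedMeasure μU ν) := by
  refine (integrable_map_measure (Continuous.aestronglyMeasurable ?_)
    continuous_plantedArray.aemeasurable).2 (integrable_prod_hermiteN_plantedArray hu hmom hA)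
  exact continuous_finsetProd _ fun i _ => continuous_finsetProd _ fun j _ =>
    (continuous_hermiteN _).comp (continuous_apply_apply i j)

theorem integral_prod_hermiteN_plantedMeasure (hu : ∀ᵐ u ∂μU, u ⬝ᵥ u = 1)
    (hmom : ∀ i, ∀ k ≤ D, Integrable (fun x : ℝ => |x| ^ k) (ν i)) {A : ι → κ → ℕ}
    (hA : ∑ i, ∑ j, A i j ≤ D) :
    ∫ Y, ∏ i, ∏ j, hermiteN (A i j) (Y i j) ∂plantedMeasure μU ν
      = (∫ u, ∏ i, ∏ j, u j ^ A i j ∂μU) *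
        ∏ i, √(Nat.multinomial Finset.univ (A i)) * ∫ x, hermiteN (∑ j, A i j) x ∂ν i := by
  have hnoise : ∀ᵐ p : (κ → ℝ) × (ι → ℝ) ∂μU.prod (Measure.pi ν),
      ∫ z, ∏ i, ∏ j, hermiteN (A i j) (plantedArray (p, z) i j) ∂nullMeasure ι κ
        = (∏ i, ∏ j, p.1 j ^ A i j) *
          ∏ i, √(Nat.multinomial Finset.univ (A i)) * hermiteN (∑ j, A i j) (p.2 i) := by
    filter_upwards [Measure.quasiMeasurePreserving_fst.ae hu] with p hp
    simp only [← Finset.prod_mul_distrib, ← integral_prod_hermiteN_plantedRow hp]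
    exact integral_fintype_prod_eq_prod fun i z =>
      ∏ j, hermiteN (A i j) (plantedRow p.1 (p.2 i) z j)
  have hmap : ∫ Y, ∏ i, ∏ j, hermiteN (A i j) (Y i j) ∂plantedMeasure μU ν
      = ∫ w, ∏ i, ∏ j, hermiteN (A i j) (plantedArray w i j) ∂plantedSource μU ν :=
    integral_map continuous_plantedArray.aemeasurable
      (integrable_prod_hermiteN_plantedMeasure hu hmom hA).aestronglyMeasurable
  rw [hmap, plantedSource, integral_prod _ (integrable_prod_hermiteN_plantedArray hu hmom hA),
    integral_congr_ae hnoise, integral_prod_mul (fun u : κ → ℝ => ∏ i, ∏ j, u j ^ A i j)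
      (fun x : ι → ℝ => ∏ i, √(Nat.multinomial Finset.univ (A i)) * hermiteN (∑ j, A i j) (x i)),
    integral_fintype_prod_eq_prod fun i x =>
      √(Nat.multinomial Finset.univ (A i)) * hermiteN (∑ j, A i j) x]
  simp only [integral_const_mul]

end PlantedModel

section ReplicaOverlap

variable {ι κ : Type*} [Fintype ι] [Fintype κ]

theorem integrable_prod_prod_pow {μU : Measure (κ → ℝ)} [IsFiniteMeasure μU]
    (hu : ∀ᵐ u ∂μU, u ⬝ᵥ u = 1) (A : ι → κ → ℕ) :
    Integrable (fun u => ∏ i, ∏ j, u j ^ A i j) μU := by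
  refine .of_bound (Continuous.aestronglyMeasurable (by fun_prop)) 1 ?_
  filter_upwards [hu] with u hu
  simp only [Real.norm_eq_abs, Finset.abs_prod, abs_pow]
  exact Finset.prod_le_one (fun _ _ => by positivity) fun i _ =>
    Finset.prod_le_one (fun _ _ => by positivity) fun j _ =>
      pow_le_one₀ (abs_nonneg _) (abs_le_one_of_dotProduct_self_eq_one hu j)

variable [DecidableEq ι] [DecidableEq κ]

theorem sum_piFinset_piAntidiag_multinomial_mul_prod_pow {R : Type*} [CommSemiring R] (α : ι → ℕ)
    (v : κ → R) :
    ∑ A ∈ Fintype.piFinset fun i => Finset.univ.piAntidiag (α i),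
      (∏ i, (Nat.multinomial Finset.univ (A i) : R)) * ∏ i, ∏ j, v j ^ A i j
      = (∑ j, v j) ^ ∑ i, α i := by
  rw [← Finset.prod_pow_eq_pow_sum]
  simp only [Finset.sum_pow_eq_sum_piAntidiag, Finset.prod_univ_sum, Finset.prod_mul_distrib]

theorem sum_piAntidiag_prod {M : Type*} [AddCommMonoid M] (d : ℕ) (F : (ι → κ → ℕ) → M) :
    ∑ a ∈ Finset.univ.piAntidiag d, F (Function.curry a)
      = ∑ α ∈ Finset.univ.piAntidiag d,
          ∑ A ∈ Fintype.piFinset fun i => Finset.univ.piAntidiag (α i), F A := by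
  rw [Finset.sum_sigma']
  refine Finset.sum_nbij' (fun a => ⟨fun i => ∑ j, a (i, j), Function.curry a⟩)
    (fun p => Function.uncurry p.2) (fun a ha => ?_) ?_ (fun _ _ => rfl) ?_ (fun _ _ => rfl)
  · have hsum : ∑ i, ∑ j, a (i, j) = d := by simpa [Fintype.sum_prod_type] using ha
    simpa using ⟨hsum, fun _ => rfl⟩
  · rintro ⟨α, A⟩ hA
    obtain ⟨hα, hrow⟩ : ∑ i, α i = d ∧ ∀ i, ∑ j, A i j = α i := by simpa using hA
    simp [Fintype.sum_prod_type, Function.uncurry, hrow, hα]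
  · rintro ⟨α, A⟩ hA
    obtain ⟨-, hrow⟩ : ∑ i, α i = d ∧ ∀ i, ∑ j, A i j = α i := by simpa using hA
    simp [Function.uncurry, hrow]

theorem sum_multiIndicesLE_prod {M : Type*} [AddCommMonoid M] (D : ℕ) (F : (ι → κ → ℕ) → M) :
    ∑ a ∈ multiIndicesLE (ι × κ) D, F (Function.curry a)
      = ∑ d ∈ Finset.range (D + 1), ∑ α ∈ Finset.univ.piAntidiag d,
          ∑ A ∈ Fintype.piFinset fun i => Finset.univ.piAntidiag (α i), F A := by
  rw [multiIndicesLE, Finset.sum_biUnion]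
  · simp only [sum_piAntidiag_prod]
  · intro d _ e _ hde
    refine Finset.disjoint_left.2 fun a had hae => hde ?_
    rw [← (Finset.mem_piAntidiag.1 had).1, ← (Finset.mem_piAntidiag.1 hae).1]

theorem sum_multinomial_mul_sq_integral_prod_pow {μU : Measure (κ → ℝ)} [IsFiniteMeasure μU]
    (hu : ∀ᵐ u ∂μU, u ⬝ᵥ u = 1) (α : ι → ℕ) :
    ∑ A ∈ Fintype.piFinset fun i => Finset.univ.piAntidiag (α i),
      (∏ i, (Nat.multinomial Finset.univ (A i) : ℝ)) * (∫ u, ∏ i, ∏ j, u j ^ A i j ∂μU) ^ 2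
      = ∫ p, (∑ j, p.1 j * p.2 j) ^ ∑ i, α i ∂μU.prod μU := by
  have hcopies (A : ι → κ → ℕ) : (∫ u, ∏ i, ∏ j, u j ^ A i j ∂μU) ^ 2
      = ∫ p : (κ → ℝ) × (κ → ℝ), ∏ i, ∏ j, (p.1 j * p.2 j) ^ A i j ∂μU.prod μU := by
    simp only [mul_pow, Finset.prod_mul_distrib]
    rw [pow_two]
    exact (integral_prod_mul (fun u : κ → ℝ => ∏ i, ∏ j, u j ^ A i j) _).symm
  have hint (A : ι → κ → ℕ) :
      Integrable (fun p : (κ → ℝ) × (κ → ℝ) => ∏ i, ∏ j, (p.1 j * p.2 j) ^ A i j)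
        (μU.prod μU) := by
    simp only [mul_pow, Finset.prod_mul_distrib]
    exact (integrable_prod_prod_pow hu A).mul_prod (integrable_prod_prod_pow hu A)
  simp only [hcopies, ← integral_const_mul]
  rw [← integral_finsetSum _ fun A _ => (hint A).const_mul _]
  simp only [sum_piFinset_piAntidiag_multinomial_mul_prod_pow]

theorem sum_sq_integral_prod_pow_mul_prod {μU : Measure (κ → ℝ)} [IsFiniteMeasure μU]
    (hu : ∀ᵐ u ∂μU, u ⬝ᵥ u = 1) (m : ι → ℕ → ℝ) (α : ι → ℕ) :
    ∑ A ∈ Fintype.piFinset fun i => Finset.univ.piAntidiag (α i),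
      ((∫ u, ∏ i, ∏ j, u j ^ A i j ∂μU) *
        ∏ i, √(Nat.multinomial Finset.univ (A i)) * m i (∑ j, A i j)) ^ 2
      = (∫ p, (∑ j, p.1 j * p.2 j) ^ (∑ i, α i) ∂μU.prod μU) * ∏ i, m i (α i) ^ 2 := by
  rw [← sum_multinomial_mul_sq_integral_prod_pow hu, Finset.sum_mul]
  refine Finset.sum_congr rfl fun A hA => ?_
  have hrow (i : ι) : ∑ j, A i j = α i :=
    (Finset.mem_piAntidiag.1 (Fintype.mem_piFinset.1 hA i)).1
  simp only [hrow, mul_pow, Finset.prod_mul_distrib, ← Finset.prod_pow,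
    Real.sq_sqrt (Nat.cast_nonneg _)]
  ring

end ReplicaOverlap

theorem ae_dotProduct_self_eq_one {n : ℕ} {μU : Measure (Fin n → ℝ)} [IsProbabilityMeasure μU]
    (hsphere : μU {u | eucNorm u = 1} = 1) : ∀ᵐ u ∂μU, u ⬝ᵥ u = 1 := by
  have hmeas : MeasurableSet {u : Fin n → ℝ | eucNorm u = 1} := by
    refine (measurableSet_singleton (1 : ℝ)).preimage (f := eucNorm) ?_
    unfold eucNorm
    fun_prop
  filter_upwards [(mem_ae_iff_prob_eq_one hmeas).2 hsphere] with u hu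
  simpa only [dotProduct, pow_two] using Real.sqrt_eq_one.1 hu

theorem stmt_19_general {ι κ : Type*} [Fintype ι] [Fintype κ] [DecidableEq ι]
    (D : ℕ) (μU : Measure (κ → ℝ)) [IsFiniteMeasure μU] (hu : ∀ᵐ u ∂μU, u ⬝ᵥ u = 1)
    (ν : ι → Measure ℝ) [∀ i, SigmaFinite (ν i)]
    (hmom : ∀ i, ∀ k ≤ D, Integrable (fun x : ℝ => |x| ^ k) (ν i)) :
    lowDegreeAdvantage D (fun (Y : ι → κ → ℝ) (q : ι × κ) => Y q.1 q.2) (plantedMeasure μU ν)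
        (nullMeasure ι κ) ^ 2
      = ∑ d ∈ Finset.range (D + 1), (∫ p, (∑ j, p.1 j * p.2 j) ^ d ∂μU.prod μU)
          * ∑ α ∈ Finset.univ.piAntidiag d, ∏ i, (∫ x, hermiteN (α i) x ∂ν i) ^ 2 := by
  classical
  have hdeg {a : ι × κ → ℕ} (ha : a ∈ multiIndicesLE (ι × κ) D) :
      ∑ i, ∑ j, Function.curry a i j ≤ D := by
    rwa [mem_multiIndicesLE, Fintype.sum_prod_type] at ha
  have hprod (a : ι × κ → ℕ) (Y : ι → κ → ℝ) : ∏ q, hermiteN (a q) (Y q.1 q.2)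
      = ∏ i, ∏ j, hermiteN (Function.curry a i j) (Y i j) := Fintype.prod_prod_type _
  rw [lowDegreeAdvantage_sq_eq_sum hasLaw_uncurry_nullMeasure fun a ha => by
    simpa only [hprod] using integrable_prod_hermiteN_plantedMeasure hu hmom (hdeg ha)]
  simp only [hprod]
  rw [Finset.sum_congr rfl fun a ha => by
      rw [integral_prod_hermiteN_plantedMeasure hu hmom (hdeg ha)],
    sum_multiIndicesLE_prod D fun A => ((∫ u, ∏ i, ∏ j, u j ^ A i j ∂μU) *
      ∏ i, √(Nat.multinomial Finset.univ (A i)) * ∫ x, hermiteN (∑ j, A i j) x ∂ν i) ^ 2]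
  refine Finset.sum_congr rfl fun d _ => ?_
  rw [Finset.mul_sum]
  refine Finset.sum_congr rfl fun α hα => ?_
  rw [sum_sq_integral_prod_pow_mul_prod hu fun i k => ∫ x, hermiteN k x ∂ν i,
    (Finset.mem_piAntidiag.1 hα).1]

/-- formula for the degree-`D` advantage: let `𝒰` be a distribution on the
unit sphere of `ℝ^n` and `ν` a distribution on `ℝ` with finite first `D` moments. Under
the null `𝒬`, the rows `ỹ_i` of `Ỹ ∈ ℝ^{N×n}` are i.i.d. `N(0, I_n)`; under the planted
`𝒫`, one draws `u ∼ 𝒰` and i.i.d. `x_1, …, x_N ∼ ν` and then independent rows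
`ỹ_i ∼ N(x_i u, I_n - uuᵀ)` — realized as `ỹ_i = x_i u + z_i - ⟨z_i, u⟩ u` with
`z_i ∼ N(0, I_n)` i.i.d. Then
`Adv_{≤D}² = ∑_{d=0}^{D} 𝔼[⟨u,u'⟩^d] ∑_{α ∈ ℕ^N, |α| = d} ∏_i (𝔼_ν[h_{α_i}])²`,
where `Adv_{≤D}` is the supremum of `𝔼_𝒫[f]/√(𝔼_𝒬[f²])` over nonzero polynomials `f` of
degree at most `D` in the `Nn` entries of `Ỹ`, and `u, u' ∼ 𝒰` are independent. -/
theorem stmt_19 (N n D : ℕ) (hN : 1 ≤ N) (hn : 1 ≤ n) (hD : 1 ≤ D)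
    (μU : Measure (Fin n → ℝ)) [IsProbabilityMeasure μU]
    (hsphere : μU {u | eucNorm u = 1} = 1)
    (ν : Measure ℝ) [IsProbabilityMeasure ν]
    (hmom : ∀ k : ℕ, k ≤ D → Integrable (fun x : ℝ => |x| ^ k) ν) :
    (sSup {r : ℝ | ∃ f : MvPolynomial (Fin N × Fin n) ℝ,
        f.totalDegree ≤ D ∧ f ≠ 0 ∧
        r = (∫ Y, MvPolynomial.eval (fun q => Y q.1 q.2) f
              ∂(Measure.map
                (fun w : ((Fin n → ℝ) × (Fin N → ℝ)) × (Fin N → Fin n → ℝ) =>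
                  fun i j =>
                    w.1.2 i * w.1.1 j + w.2 i j - (∑ l, w.2 i l * w.1.1 l) * w.1.1 j)
                ((μU.prod (Measure.pi fun _ : Fin N => ν)).prod
                  (Measure.pi fun _ : Fin N =>
                    (Measure.pi fun _ : Fin n => gaussianReal 0 1)))))
            / Real.sqrt (∫ Y, (MvPolynomial.eval (fun q => Y q.1 q.2) f) ^ 2
              ∂(Measure.pi fun _ : Fin N =>
                  (Measure.pi fun _ : Fin n => gaussianReal 0 1)))}) ^ 2
      = ∑ d ∈ Finset.range (D + 1),
          (∫ p, (∑ i, p.1 i * p.2 i) ^ d ∂(μU.prod μU))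
            * ∑ α ∈ Finset.Nat.antidiagonalTuple N d,
                ∏ i, (∫ x, hermiteN (α i) x ∂ν) ^ 2 := by
  simp only [← Finset.piAntidiag_univ_fin_eq_antidiagonalTuple]
  exact stmt_19_general D μU (ae_dotProduct_self_eq_one hsphere) (fun _ => ν) fun _ => hmom
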